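/- Let x, y, σ ∈ ℂ with Re x > 0, Re y > 0, and |Re σ| < 3/4. Then √x · √y · U(3/2, 3, x+y) = (2^{1/2} e^{(x+y)/2} / (π^{3/2} i)) ∫_{σ−i∞}^{σ+i∞} Γ(3/4 − s) Γ(3/4 + s) D_{2s−1/2}(√(2x)) D_{−2s−1/2}(√(2y)) ds, where √x, √y, √(2x), √(2y) are principal square roots. (Note that for s on the contour, Re(2s − 1/2) < 1 and Re(−2s − 1/2) < 1, and Re((√(2x))²/2) = Re x > 0, so the parabolic cylinder functions are in the domain of the stated representation.) -/

import Mathlib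

/-- Confluent hypergeometric function of the second kind via its Laplace-transform
representation, valid for `Re a > 0`, `Re z > 0` (principal branch powers). -/
noncomputable def hypU (a b z : ℂ) : ℂ :=
  (Complex.Gamma a)⁻¹ *
    ∫ t in Set.Ioi (0 : ℝ), Complex.exp (-z * t) * (t : ℂ) ^ (a - 1) * ((1 : ℂ) + t) ^ (b - a - 1)

/-- Parabolic cylinder function `D_ν(z) = 2^{(ν-1)/2} e^{-z²/4} z U((1-ν)/2, 3/2, z²/2)`,
valid for `Re ν < 1`, `Re(z²) > 0` (principal branch powers). -/
noncomputable def parD (ν z : ℂ) : ℂ :=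
  (2 : ℂ) ^ ((ν - 1) / 2) * Complex.exp (-z ^ 2 / 4) * z * hypU ((1 - ν) / 2) (3 / 2) (z ^ 2 / 2)

/-!
In the variable `p` given by `t = 1 / (e ^ p - 1)`, the integral for `Γ(a - s) U(a - s, b, z)`
becomes a Laplace transform in `s` of a kernel on `(0, ∞)`, because `(1 + t) / t = e ^ p`.
Multiplying two such kernels adds their parameters `a`, `b` and `z`. Hence Parseval's formula
along a vertical line turns `∫ Γ(a₁ - s) U(a₁ - s, b₁, z₁) Γ(a₂ + s) U(a₂ + s, b₂, z₂) ds` into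
`2πi Γ(a₁ + a₂) U(a₁ + a₂, b₁ + b₂, z₁ + z₂)`. The case `b₁ = b₂ = 3 / 2` concerns parabolic
cylinder functions.
-/

open MeasureTheory Set Filter
open scoped Real FourierTransform SchwartzMap ComplexConjugate ComplexInnerProductSpace Topology

section Plancherel

variable {V E : Type*} [NormedAddCommGroup V] [InnerProductSpace ℝ V] [FiniteDimensional ℝ V]
  [MeasurableSpace V] [BorelSpace V] [NormedAddCommGroup E]

lemma continuous_fourier_of_integrable [NormedSpace ℂ E] {f : V → E} (hf : Integrable f) :
    Continuous (𝓕 f) :=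
  VectorFourier.fourierIntegral_continuous Real.continuous_fourierChar continuous_inner hf

lemma fourier_conj (f : V → ℂ) (ξ : V) : 𝓕 (fun v ↦ conj (f v)) ξ = conj (𝓕 f (-ξ)) := by
  rw [Real.fourier_eq', Real.fourier_eq', ← integral_conj]
  congr 1 with v
  simp [← Complex.exp_conj, map_ofNat]

lemma integral_fourier_smul_eq [NormedSpace ℂ E] [CompleteSpace E] {φ : V → ℂ} {f : V → E}
    (hφ : Integrable φ) (hf : Integrable f) :
    ∫ v, 𝓕 φ v • f v = ∫ v, φ v • 𝓕 f v := by
  have h := VectorFourier.integral_fourierIntegral_smul_eq_flip (L := innerₗ V)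
    Real.continuous_fourierChar continuous_inner hφ hf
  rwa [flip_innerₗ] at h

variable [InnerProductSpace ℂ E] [CompleteSpace E]

lemma coeFn_fourier_toLp {f : V → E} (hf : Integrable f) (hf₂ : MemLp f 2) :
    (𝓕 (hf₂.toLp f) : V →₂[volume] E) =ᵐ[volume] 𝓕 f := by
  refine ae_eq_of_integral_contDiff_smul_eq ((Lp.memLp _).locallyIntegrable one_le_two)
    (continuous_fourier_of_integrable hf).locallyIntegrable fun g hg hgc ↦ ?_
  let φ : 𝓢(V, ℂ) := HasCompactSupport.toSchwartzMap (f := fun v ↦ (g v : ℂ))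
    (hgc.comp_left Complex.ofReal_zero) (Complex.ofRealCLM.contDiff.comp hg)
  have hφ (v : V) : φ v = g v := rfl
  calc ∫ v, g v • (𝓕 (hf₂.toLp f) : V →₂[volume] E) v
      = Lp.toTemperedDistribution (𝓕 (hf₂.toLp f) : V →₂[volume] E) φ := by
        simp only [Lp.toTemperedDistribution_apply, hφ, Complex.coe_smul]
    _ = ∫ v, 𝓕 φ v • hf₂.toLp f v := by
        rw [← Lp.fourier_toTemperedDistribution_eq, TemperedDistribution.fourier_apply,
          Lp.toTemperedDistribution_apply]
    _ = ∫ v, 𝓕 φ v • f v :=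
        integral_congr_ae (hf₂.coeFn_toLp.mono fun v hv ↦ congrArg (𝓕 φ v • ·) hv)
    _ = ∫ v, φ v • 𝓕 f v := by
        rw [SchwartzMap.fourier_coe, integral_fourier_smul_eq φ.integrable hf]
    _ = ∫ v, g v • 𝓕 f v := by
        simp only [hφ, Complex.coe_smul]

lemma integral_inner_fourier_fourier {f g : V → E} (hf : Integrable f) (hf₂ : MemLp f 2)
    (hg : Integrable g) (hg₂ : MemLp g 2) :
    ∫ ξ, ⟪𝓕 f ξ, 𝓕 g ξ⟫ = ∫ v, ⟪f v, g v⟫ := by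
  calc ∫ ξ, ⟪𝓕 f ξ, 𝓕 g ξ⟫ = ⟪(𝓕 (hf₂.toLp f) : V →₂[volume] E), 𝓕 (hg₂.toLp g)⟫ := by
        rw [L2.inner_def]
        refine integral_congr_ae ?_
        filter_upwards [coeFn_fourier_toLp hf hf₂, coeFn_fourier_toLp hg hg₂] with ξ hfξ hgξ
        rw [hfξ, hgξ]
    _ = ⟪hf₂.toLp f, hg₂.toLp g⟫ := Lp.inner_fourier_eq _ _
    _ = ∫ v, ⟪f v, g v⟫ := by
        rw [L2.inner_def]
        refine integral_congr_ae ?_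
        filter_upwards [hf₂.coeFn_toLp, hg₂.coeFn_toLp] with v hfv hgv
        rw [hfv, hgv]

lemma integral_fourier_neg_mul_fourier {f g : V → ℂ} (hf : Integrable f) (hf₂ : MemLp f 2)
    (hg : Integrable g) (hg₂ : MemLp g 2) :
    ∫ ξ, 𝓕 f (-ξ) * 𝓕 g ξ = ∫ v, f v * g v := by
  have hconj : Integrable fun v ↦ conj (f v) := Complex.conjLIE.integrable_comp_iff.2 hf
  simpa only [RCLike.inner_apply, fourier_conj, Complex.conj_conj, mul_comm] using
    integral_inner_fourier_fourier hconj hf₂.star hg hg₂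

end Plancherel

lemma isBigO_exp_neg_mul_one_add_cpow {z : ℂ} (c : ℂ) {r : ℝ} (hr : r < z.re) :
    (fun t : ℝ ↦ Complex.exp (-z * t) * (1 + t : ℂ) ^ c) =O[atTop] fun t ↦ Real.exp (-r * t) := by
  have hpow : (fun t : ℝ ↦ (1 + t) ^ c.re) =O[atTop] fun t ↦ Real.exp ((z.re - r) * (1 + t)) :=
    (isLittleO_rpow_exp_pos_mul_atTop c.re (sub_pos.2 hr)).isBigO.comp_tendsto
      (tendsto_atTop_add_const_left atTop 1 tendsto_id)
  have hnorm : (fun t : ℝ ↦ Complex.exp (-z * t) * (1 + t : ℂ) ^ c) =O[atTop]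
      fun t ↦ Real.exp (-z.re * t) * (1 + t) ^ c.re := by
    refine .of_bound' ?_
    filter_upwards [eventually_ge_atTop 0] with t ht
    have h1t : 0 < 1 + t := by positivity
    rw [norm_mul, Complex.norm_exp, norm_mul, Real.norm_of_nonneg (Real.exp_pos _).le,
      Real.norm_of_nonneg (by positivity), ← Complex.norm_cpow_eq_rpow_re_of_pos h1t]
    simp
  refine (hnorm.trans ((Asymptotics.isBigO_refl _ _).mul hpow)).trans
    (.of_bound (Real.exp (z.re - r)) (.of_forall fun t ↦ le_of_eq ?_))
  simp only [← Real.exp_add, Real.norm_eq_abs, Real.abs_exp]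
  ring_nf

lemma integrableOn_exp_neg_mul_cpow_mul_one_add_cpow {a z : ℂ} (c : ℂ) (ha : 0 < a.re)
    (hz : 0 < z.re) :
    IntegrableOn (fun t : ℝ ↦ Complex.exp (-z * t) * (t : ℂ) ^ (a - 1) * (1 + t : ℂ) ^ c)
      (Ioi 0) := by
  let g : ℝ → ℂ := fun t ↦ Complex.exp (-z * t) * (1 + t : ℂ) ^ c
  have hcont : ContinuousOn g (Ici 0) := by
    intro t ht
    have : (1 + t : ℂ) ∈ Complex.slitPlane := by left; simp; linarith [mem_Ici.1 ht]
    fun_prop (disch := assumption)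
  have hzero : g =O[𝓝[>] 0] fun t ↦ t ^ (-(0 : ℝ)) := by
    simpa using ((hcont 0 self_mem_Ici).mono Ioi_subset_Ici_self).tendsto.isBigO_one ℝ
  refine (mellinConvergent_of_isBigO_rpow_exp (half_pos hz)
    ((hcont.mono Ioi_subset_Ici_self).locallyIntegrableOn measurableSet_Ioi)
    (isBigO_exp_neg_mul_one_add_cpow c (half_lt_self hz)) hzero
    ha).congr_fun (fun t _ ↦ ?_) measurableSet_Ioi
  simp only [g, smul_eq_mul]
  ring

/-- The substitution `t = 1 / (e ^ p - 1)`, which identifies `(0, ∞)` with itself and linearises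
the dependence of the integrand of `hypU` on its first parameter, as `(1 + t) / t = e ^ p`. -/
noncomputable def invExpSubOne (p : ℝ) : ℝ := (Real.exp p - 1)⁻¹

lemma exp_sub_one_pos {p : ℝ} (hp : 0 < p) : 0 < Real.exp p - 1 :=
  sub_pos.2 (Real.one_lt_exp_iff.2 hp)

lemma invExpSubOne_pos {p : ℝ} (hp : 0 < p) : 0 < invExpSubOne p :=
  inv_pos.2 (exp_sub_one_pos hp)

lemma ofReal_invExpSubOne_ne_zero {p : ℝ} (hp : 0 < p) : (invExpSubOne p : ℂ) ≠ 0 :=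
  Complex.ofReal_ne_zero.2 (invExpSubOne_pos hp).ne'

lemma one_add_ofReal_invExpSubOne_ne_zero {p : ℝ} (hp : 0 < p) : (1 + invExpSubOne p : ℂ) ≠ 0 := by
  exact_mod_cast (add_pos one_pos (invExpSubOne_pos hp)).ne'

lemma one_add_invExpSubOne {p : ℝ} (hp : 0 < p) :
    1 + invExpSubOne p = Real.exp p * invExpSubOne p := by
  have h := (exp_sub_one_pos hp).ne'
  rw [invExpSubOne]
  field_simp
  ring

lemma hasDerivAt_invExpSubOne {p : ℝ} (hp : 0 < p) :
    HasDerivAt invExpSubOne (-(invExpSubOne p * (1 + invExpSubOne p))) p := by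
  refine (((Real.hasDerivAt_exp p).sub_const 1).fun_inv (exp_sub_one_pos hp).ne').congr_deriv ?_
  rw [one_add_invExpSubOne hp, invExpSubOne]
  field_simp

lemma bijOn_invExpSubOne : BijOn invExpSubOne (Ioi 0) (Ioi 0) := by
  refine ⟨fun p hp ↦ invExpSubOne_pos hp, fun p _ q _ h ↦ ?_, fun t ht ↦ ?_⟩
  · exact Real.exp_injective (sub_left_injective (inv_injective h))
  · rw [mem_Ioi] at ht
    refine ⟨Real.log (1 + t⁻¹), Real.log_pos (by simpa using ht), ?_⟩
    rw [invExpSubOne, Real.exp_log (by positivity), add_sub_cancel_left, inv_inv]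

/-- The integrand of `Γ(a) U(a, b, z)` in the variable `p` of `t = 1 / (e ^ p - 1)`, with the
Jacobian `|dt/dp| = t (1 + t)` absorbed into the powers. It is extended by zero to `p ≤ 0` so that
Fourier analysis on the whole line applies to it. -/
noncomputable def hypUKernel (a b z : ℂ) : ℝ → ℂ :=
  (Ioi 0).indicator fun p ↦
    Complex.exp (-z * invExpSubOne p) * (invExpSubOne p : ℂ) ^ a *
      (1 + invExpSubOne p : ℂ) ^ (b - a)

lemma hypUKernel_of_pos {p : ℝ} (hp : 0 < p) (a b z : ℂ) :
    hypUKernel a b z p = Complex.exp (-z * invExpSubOne p) * (invExpSubOne p : ℂ) ^ a *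
      (1 + invExpSubOne p : ℂ) ^ (b - a) :=
  indicator_of_mem (mem_Ioi.2 hp) _

lemma hypUKernel_of_nonpos {p : ℝ} (hp : p ≤ 0) (a b z : ℂ) : hypUKernel a b z p = 0 :=
  indicator_of_notMem (notMem_Ioi.2 hp) _

lemma hypUKernel_mul_hypUKernel (a₁ a₂ b₁ b₂ z₁ z₂ : ℂ) (p : ℝ) :
    hypUKernel a₁ b₁ z₁ p * hypUKernel a₂ b₂ z₂ p =
      hypUKernel (a₁ + a₂) (b₁ + b₂) (z₁ + z₂) p := by
  rcases le_or_gt p 0 with hp | hp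
  · simp only [hypUKernel_of_nonpos hp, mul_zero]
  · simp only [hypUKernel_of_pos hp]
    rw [neg_add, add_mul, Complex.exp_add, add_sub_add_comm,
      Complex.cpow_add _ _ (ofReal_invExpSubOne_ne_zero hp),
      Complex.cpow_add _ _ (one_add_ofReal_invExpSubOne_ne_zero hp)]
    ring

lemma one_add_invExpSubOne_cpow {p : ℝ} (hp : 0 < p) (s : ℂ) :
    (1 + invExpSubOne p : ℂ) ^ s = Complex.exp (p * s) * (invExpSubOne p : ℂ) ^ s := by
  rw [← Complex.ofReal_one, ← Complex.ofReal_add, one_add_invExpSubOne hp, Complex.ofReal_mul,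
    Complex.mul_cpow_ofReal_nonneg (Real.exp_pos p).le (invExpSubOne_pos hp).le,
    Complex.cpow_def_of_ne_zero (Complex.ofReal_ne_zero.2 (Real.exp_ne_zero p)),
    ← Complex.ofReal_log (Real.exp_pos p).le, Real.log_exp]

lemma hypUKernel_add (a b z s : ℂ) (p : ℝ) :
    hypUKernel (a + s) b z p = Complex.exp (-(p * s)) * hypUKernel a b z p := by
  rcases le_or_gt p 0 with hp | hp
  · simp only [hypUKernel_of_nonpos hp, mul_zero]
  · have hpow : (invExpSubOne p : ℂ) ^ s ≠ 0 := by
      simp [Complex.cpow_eq_zero_iff, ofReal_invExpSubOne_ne_zero hp]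
    simp only [hypUKernel_of_pos hp]
    rw [Complex.cpow_add _ _ (ofReal_invExpSubOne_ne_zero hp), ← sub_sub,
      Complex.cpow_sub _ _ (one_add_ofReal_invExpSubOne_ne_zero hp),
      one_add_invExpSubOne_cpow hp s, Complex.exp_neg]
    field_simp

lemma abs_deriv_smul_eq_hypUKernel {p : ℝ} (hp : 0 < p) (a b z : ℂ) :
    |-(invExpSubOne p * (1 + invExpSubOne p))| •
      (Complex.exp (-z * invExpSubOne p) * (invExpSubOne p : ℂ) ^ (a - 1) *
        (1 + invExpSubOne p : ℂ) ^ (b - a - 1)) = hypUKernel a b z p := by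
  have ht := invExpSubOne_pos hp
  have ht₀ := ofReal_invExpSubOne_ne_zero hp
  have ht₁ := one_add_ofReal_invExpSubOne_ne_zero hp
  rw [abs_neg, abs_of_pos (by positivity), hypUKernel_of_pos hp, Complex.cpow_sub _ _ ht₀,
    Complex.cpow_sub _ _ ht₁, Complex.cpow_one, Complex.cpow_one, Complex.real_smul]
  push_cast
  field_simp

lemma integral_hypUKernel (a b z : ℂ) :
    ∫ p, hypUKernel a b z p =
      ∫ t in Ioi (0 : ℝ), Complex.exp (-z * t) * (t : ℂ) ^ (a - 1) * (1 + t : ℂ) ^ (b - a - 1) := by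
  rw [← bijOn_invExpSubOne.image_eq, integral_image_eq_integral_abs_deriv_smul measurableSet_Ioi
    (fun p hp ↦ (hasDerivAt_invExpSubOne hp).hasDerivWithinAt) bijOn_invExpSubOne.injOn,
    setIntegral_congr_fun measurableSet_Ioi fun p hp ↦ abs_deriv_smul_eq_hypUKernel hp a b z]
  exact (setIntegral_eq_integral_of_forall_compl_eq_zero
    fun p hp ↦ hypUKernel_of_nonpos (notMem_Ioi.1 hp) a b z).symm

lemma integrable_hypUKernel {a z : ℂ} (ha : 0 < a.re) (b : ℂ) (hz : 0 < z.re) :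
    Integrable (hypUKernel a b z) := by
  have h := integrableOn_exp_neg_mul_cpow_mul_one_add_cpow (b - a - 1) ha hz
  rw [← bijOn_invExpSubOne.image_eq, integrableOn_image_iff_integrableOn_abs_deriv_smul
    measurableSet_Ioi (fun p hp ↦ (hasDerivAt_invExpSubOne hp).hasDerivWithinAt)
    bijOn_invExpSubOne.injOn] at h
  exact (h.congr_fun (fun p hp ↦ abs_deriv_smul_eq_hypUKernel hp a b z)
    measurableSet_Ioi).integrable_of_forall_notMem_eq_zero
    fun p hp ↦ hypUKernel_of_nonpos (notMem_Ioi.1 hp) a b z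

lemma memLp_two_hypUKernel {a z : ℂ} (ha : 0 < a.re) (b : ℂ) (hz : 0 < z.re) :
    MemLp (hypUKernel a b z) 2 := by
  rw [memLp_two_iff_integrable_sq_norm (integrable_hypUKernel ha b hz).aestronglyMeasurable]
  -- The square of the kernel is the kernel with doubled parameters.
  refine (integrable_hypUKernel (a := a + a) (z := z + z) ?_ (b + b) ?_).norm.congr
    (.of_forall fun p ↦ ?_)
  · simpa using ha
  · simpa using hz
  · simp only [← hypUKernel_mul_hypUKernel, norm_mul, sq]

lemma Gamma_mul_hypU {a : ℂ} (ha : 0 < a.re) (b z : ℂ) :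
    Complex.Gamma a * hypU a b z = ∫ p, hypUKernel a b z p := by
  rw [hypU, mul_inv_cancel_left₀ (Complex.Gamma_ne_zero_of_re_pos ha), integral_hypUKernel]

lemma fourier_hypUKernel {a : ℂ} (ha : 0 < a.re) (b z : ℂ) (ξ : ℝ) :
    𝓕 (hypUKernel a b z) ξ =
      Complex.Gamma (a + 2 * π * ξ * Complex.I) * hypU (a + 2 * π * ξ * Complex.I) b z := by
  rw [Gamma_mul_hypU (by simpa using ha), Real.fourier_real_eq_integral_exp_smul]
  congr 1 with p
  rw [hypUKernel_add, smul_eq_mul]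
  push_cast
  ring_nf

lemma integral_Gamma_mul_hypU_mul_Gamma_mul_hypU {a₁ a₂ z₁ z₂ : ℂ} (ha₁ : 0 < a₁.re)
    (ha₂ : 0 < a₂.re) (b₁ b₂ : ℂ) (hz₁ : 0 < z₁.re) (hz₂ : 0 < z₂.re) :
    ∫ τ : ℝ, Complex.Gamma (a₁ - Complex.I * τ) * hypU (a₁ - Complex.I * τ) b₁ z₁ *
        (Complex.Gamma (a₂ + Complex.I * τ) * hypU (a₂ + Complex.I * τ) b₂ z₂) =
      2 * π * (Complex.Gamma (a₁ + a₂) * hypU (a₁ + a₂) (b₁ + b₂) (z₁ + z₂)) := by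
  have hπ : (π : ℂ) ≠ 0 := Complex.ofReal_ne_zero.2 Real.pi_ne_zero
  have hfourier (τ : ℝ) :
      Complex.Gamma (a₁ - Complex.I * τ) * hypU (a₁ - Complex.I * τ) b₁ z₁ *
          (Complex.Gamma (a₂ + Complex.I * τ) * hypU (a₂ + Complex.I * τ) b₂ z₂) =
        𝓕 (hypUKernel a₁ b₁ z₁) (-(τ / (2 * π))) * 𝓕 (hypUKernel a₂ b₂ z₂) (τ / (2 * π)) := by
    have hτ : 2 * π * (τ / (2 * π)) * Complex.I = Complex.I * τ := by field_simp
    rw [fourier_hypUKernel ha₁, fourier_hypUKernel ha₂]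
    push_cast
    rw [mul_neg, neg_mul, hτ, ← sub_eq_add_neg]
  calc _ = ∫ τ : ℝ, 𝓕 (hypUKernel a₁ b₁ z₁) (-(τ / (2 * π))) *
          𝓕 (hypUKernel a₂ b₂ z₂) (τ / (2 * π)) := by simp_rw [hfourier]
    _ = 2 * π * ∫ ξ, 𝓕 (hypUKernel a₁ b₁ z₁) (-ξ) * 𝓕 (hypUKernel a₂ b₂ z₂) ξ := by
        rw [Measure.integral_comp_div
          (fun ξ ↦ 𝓕 (hypUKernel a₁ b₁ z₁) (-ξ) * 𝓕 (hypUKernel a₂ b₂ z₂) ξ),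
          abs_of_pos Real.two_pi_pos, Complex.real_smul]
        push_cast
        rfl
    _ = 2 * π * ∫ p, hypUKernel (a₁ + a₂) (b₁ + b₂) (z₁ + z₂) p := by
        rw [integral_fourier_neg_mul_fourier (integrable_hypUKernel ha₁ b₁ hz₁)
          (memLp_two_hypUKernel ha₁ b₁ hz₁) (integrable_hypUKernel ha₂ b₂ hz₂)
          (memLp_two_hypUKernel ha₂ b₂ hz₂)]
        simp only [hypUKernel_mul_hypUKernel]
    _ = _ := by rw [Gamma_mul_hypU (by simpa using add_pos ha₁ ha₂)]

lemma ofReal_mul_cpow {r : ℝ} (hr : 0 < r) {z : ℂ} (hz : z ≠ 0) (s : ℂ) :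
    (r * z) ^ s = (r : ℂ) ^ s * z ^ s := by
  have hr₀ : (r : ℂ) ≠ 0 := Complex.ofReal_ne_zero.2 hr.ne'
  rw [Complex.cpow_def_of_ne_zero (mul_ne_zero hr₀ hz), Complex.cpow_def_of_ne_zero hr₀,
    Complex.cpow_def_of_ne_zero hz, Complex.log_ofReal_mul hr hz, Complex.ofReal_log hr.le,
    add_mul, Complex.exp_add]

lemma parD_one_sub_two_mul (a : ℂ) {x : ℂ} (hx : x ≠ 0) :
    parD (1 - 2 * a) ((2 * x) ^ ((1 : ℂ) / 2)) =
      (2 : ℂ) ^ (1 / 2 - a) * Complex.exp (-x / 2) * x ^ ((1 : ℂ) / 2) * hypU a (3 / 2) x := by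
  have hsq : ((2 * x) ^ ((1 : ℂ) / 2)) ^ 2 = 2 * x := by
    rw [one_div, ← Nat.cast_ofNat, Complex.cpow_nat_inv_pow _ two_ne_zero]
  have hroot : (2 * x) ^ ((1 : ℂ) / 2) = 2 ^ ((1 : ℂ) / 2) * x ^ ((1 : ℂ) / 2) :=
    mod_cast ofReal_mul_cpow two_pos hx (1 / 2)
  rw [parD, hsq, hroot, show (1 - 2 * a - 1) / 2 = -a by ring, show -(2 * x) / 4 = -x / 2 by ring,
    show (1 - (1 - 2 * a)) / 2 = a by ring, mul_div_cancel_left₀ x two_ne_zero, sub_eq_neg_add,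
    Complex.cpow_add _ _ two_ne_zero]
  ring

lemma parD_mul_parD (a b : ℂ) {x y : ℂ} (hx : x ≠ 0) (hy : y ≠ 0) :
    (2 : ℂ) ^ (a + b - 1) * Complex.exp ((x + y) / 2) *
        (parD (1 - 2 * a) ((2 * x) ^ ((1 : ℂ) / 2)) * parD (1 - 2 * b) ((2 * y) ^ ((1 : ℂ) / 2))) =
      x ^ ((1 : ℂ) / 2) * y ^ ((1 : ℂ) / 2) * (hypU a (3 / 2) x * hypU b (3 / 2) y) := by
  have hpow : (2 : ℂ) ^ (a + b - 1) * ((2 : ℂ) ^ (1 / 2 - a) * (2 : ℂ) ^ (1 / 2 - b)) = 1 := by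
    rw [← Complex.cpow_add _ _ two_ne_zero, ← Complex.cpow_add _ _ two_ne_zero,
      show a + b - 1 + (1 / 2 - a + (1 / 2 - b)) = 0 by ring, Complex.cpow_zero]
  have hexp : Complex.exp ((x + y) / 2) * (Complex.exp (-x / 2) * Complex.exp (-y / 2)) = 1 := by
    rw [← Complex.exp_add, ← Complex.exp_add, show (x + y) / 2 + (-x / 2 + -y / 2) = 0 by ring,
      Complex.exp_zero]
  rw [parD_one_sub_two_mul a hx, parD_one_sub_two_mul b hy]
  calc _ = (2 : ℂ) ^ (a + b - 1) * ((2 : ℂ) ^ (1 / 2 - a) * (2 : ℂ) ^ (1 / 2 - b)) *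
          (Complex.exp ((x + y) / 2) * (Complex.exp (-x / 2) * Complex.exp (-y / 2))) *
          (x ^ ((1 : ℂ) / 2) * y ^ ((1 : ℂ) / 2) * (hypU a (3 / 2) x * hypU b (3 / 2) y)) := by ring
    _ = _ := by rw [hpow, hexp, one_mul, one_mul]

lemma integral_Gamma_mul_Gamma_mul_parD_mul_parD {a b x y : ℂ} (ha : 0 < a.re) (hb : 0 < b.re)
    (hx : 0 < x.re) (hy : 0 < y.re) :
    (2 : ℂ) ^ (a + b - 1) * Complex.exp ((x + y) / 2) *
        ∫ τ : ℝ, Complex.Gamma (a - Complex.I * τ) * Complex.Gamma (b + Complex.I * τ) *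
          parD (1 - 2 * (a - Complex.I * τ)) ((2 * x) ^ ((1 : ℂ) / 2)) *
          parD (1 - 2 * (b + Complex.I * τ)) ((2 * y) ^ ((1 : ℂ) / 2)) =
      2 * π * Complex.Gamma (a + b) *
        (x ^ ((1 : ℂ) / 2) * y ^ ((1 : ℂ) / 2) * hypU (a + b) 3 (x + y)) := by
  have hx₀ : x ≠ 0 := by rintro rfl; exact hx.false
  have hy₀ : y ≠ 0 := by rintro rfl; exact hy.false
  calc _ = ∫ τ : ℝ, x ^ ((1 : ℂ) / 2) * y ^ ((1 : ℂ) / 2) *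
          (Complex.Gamma (a - Complex.I * τ) * hypU (a - Complex.I * τ) (3 / 2) x *
            (Complex.Gamma (b + Complex.I * τ) * hypU (b + Complex.I * τ) (3 / 2) y)) := by
        rw [← integral_const_mul]
        congr 1 with τ
        have h := parD_mul_parD (a - Complex.I * τ) (b + Complex.I * τ) hx₀ hy₀
        rw [sub_add_add_cancel] at h
        linear_combination
          Complex.Gamma (a - Complex.I * τ) * Complex.Gamma (b + Complex.I * τ) * h
    _ = _ := by
        rw [integral_const_mul, integral_Gamma_mul_hypU_mul_Gamma_mul_hypU ha hb _ _ hx hy,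
          show (3 / 2 + 3 / 2 : ℂ) = 3 by norm_num]
        ring

theorem addition_c_three_halves_general (x y σ α : ℂ) (hx : 0 < x.re) (hy : 0 < y.re)
    (hσ : |σ.re| < α.re) :
    x ^ ((1 : ℂ) / 2) * y ^ ((1 : ℂ) / 2) * hypU (2 * α) 3 (x + y) =
      ((2 : ℂ) ^ (2 * α - 1) * Complex.exp ((x + y) / 2) /
          (2 * π * Complex.Gamma (2 * α) * Complex.I)) *
        (Complex.I * ∫ τ : ℝ,
          Complex.Gamma (α - (σ + Complex.I * τ)) *
          Complex.Gamma (α + (σ + Complex.I * τ)) *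
          parD (2 * (σ + Complex.I * τ) - (2 * α - 1)) ((2 * x) ^ ((1 : ℂ) / 2)) *
          parD (-2 * (σ + Complex.I * τ) - (2 * α - 1)) ((2 * y) ^ ((1 : ℂ) / 2))) := by
  obtain ⟨hσ₁, hσ₂⟩ := abs_lt.1 hσ
  have ha : 0 < (α - σ).re := by rw [Complex.sub_re]; linarith
  have hb : 0 < (α + σ).re := by rw [Complex.add_re]; linarith
  have hsum : α - σ + (α + σ) = 2 * α := by ring
  have hΓ : Complex.Gamma (2 * α) ≠ 0 := Complex.Gamma_ne_zero_of_re_pos (hsum ▸ add_pos ha hb)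
  have hπ : (π : ℂ) ≠ 0 := Complex.ofReal_ne_zero.2 Real.pi_ne_zero
  have hν₁ (τ : ℝ) : 2 * (σ + Complex.I * τ) - (2 * α - 1) = 1 - 2 * (α - σ - Complex.I * τ) := by
    ring
  have hν₂ (τ : ℝ) : -2 * (σ + Complex.I * τ) - (2 * α - 1) = 1 - 2 * (α + σ + Complex.I * τ) := by
    ring
  have h := integral_Gamma_mul_Gamma_mul_parD_mul_parD ha hb hx hy
  rw [hsum] at h
  simp only [hν₁, hν₂, ← sub_sub, ← add_assoc]
  rw [div_mul_eq_mul_div, eq_div_iff (by simp [hΓ, hπ])]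
  linear_combination -Complex.I * h

lemma two_mul_pi_mul_Gamma_three_halves :
    2 * π * Complex.Gamma (3 / 2) = (π : ℂ) ^ ((3 : ℂ) / 2) := by
  have hπ : (π : ℂ) ≠ 0 := Complex.ofReal_ne_zero.2 Real.pi_ne_zero
  rw [show (3 / 2 : ℂ) = 1 / 2 + 1 by norm_num, Complex.Gamma_add_one _ (by norm_num),
    Complex.Gamma_one_half_eq, Complex.cpow_add _ _ hπ, Complex.cpow_one]
  ring

/-- Integral addition theorem (case `c = 3/2`):
`√x √y U(3/2,3,x+y) = (2^{1/2} e^{(x+y)/2}/(π^{3/2} i)) ∫_{σ-i∞}^{σ+i∞} Γ(3/4-s) Γ(3/4+s)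
D_{2s-1/2}(√(2x)) D_{-2s-1/2}(√(2y)) ds`, the contour integral being `i ∫_ℝ f(σ+iτ) dτ`. -/
theorem addition_c_three_halves (x y σ : ℂ) (hx : 0 < x.re) (hy : 0 < y.re)
    (hσ : |σ.re| < 3 / 4) :
    x ^ ((1 : ℂ) / 2) * y ^ ((1 : ℂ) / 2) * hypU (3 / 2) 3 (x + y) =
      ((2 : ℂ) ^ ((1 : ℂ) / 2) * Complex.exp ((x + y) / 2) /
          ((Real.pi : ℂ) ^ ((3 : ℂ) / 2) * Complex.I)) *
        (Complex.I * ∫ τ : ℝ,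
          Complex.Gamma (3 / 4 - (σ + Complex.I * τ)) *
          Complex.Gamma (3 / 4 + (σ + Complex.I * τ)) *
          parD (2 * (σ + Complex.I * τ) - 1 / 2) ((2 * x) ^ ((1 : ℂ) / 2)) *
          parD (-2 * (σ + Complex.I * τ) - 1 / 2) ((2 * y) ^ ((1 : ℂ) / 2))) := by
  have h := addition_c_three_halves_general x y σ (3 / 4) hx hy (by norm_num; exact hσ)
  rwa [show (2 * (3 / 4) : ℂ) = 3 / 2 by norm_num, two_mul_pi_mul_Gamma_three_halves,
    show (3 / 2 - 1 : ℂ) = 1 / 2 by norm_num] at h
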